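/- For all integers k, l, x, y ≥ 1, the relation [B^l C^k, B^y C^x] = (m^{ky} − m^{lx})·B^{l+y} C^{k+x} holds in R. -/

import Mathlib

noncomputable section

open FreeAlgebra

/-- The defining relation `A*B = m • (B*A) + b·1` on the free algebra `F⟨A,B⟩`
(the free unital associative algebra on two generators `A = ι F 0`, `B = ι F 1`). -/
def twistRel (F : Type*) [Field F] (m b : F) :
    FreeAlgebra F (Fin 2) → FreeAlgebra F (Fin 2) → Prop :=
  fun p q => p = ι F 0 * ι F 1 ∧
    q = m • (ι F 1 * ι F 0) + algebraMap F (FreeAlgebra F (Fin 2)) b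

/-- `R = F⟨A,B⟩ / (AB − m·BA − b·1)`. -/
abbrev TwistAlg (F : Type*) [Field F] (m b : F) := RingQuot (twistRel F m b)

/-- The image of the generator `A` in `R`. -/
def genA (F : Type*) [Field F] (m b : F) : TwistAlg F m b :=
  RingQuot.mkAlgHom F (twistRel F m b) (ι F 0)

/-- The image of the generator `B` in `R`. -/
def genB (F : Type*) [Field F] (m b : F) : TwistAlg F m b :=
  RingQuot.mkAlgHom F (twistRel F m b) (ι F 1)

/-- `C := A*B − B*A` in `R`. -/
def genC (F : Type*) [Field F] (m b : F) : TwistAlg F m b :=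
  genA F m b * genB F m b - genB F m b * genA F m b

section QCommutation

variable {S R : Type*}

section Monoid

variable [Monoid S] [Monoid R] [MulAction S R] [IsScalarTower S R R] [SMulCommClass S R R]

theorem semiconjBy_pow_pow_smul {q : S} {B C : R} (h : SemiconjBy C B (q • B)) (k n : ℕ) :
    SemiconjBy (C ^ k) (B ^ n) (q ^ (k * n) • B ^ n) := by
  have hn : SemiconjBy C (B ^ n) (q ^ n • B ^ n) := by
    simpa only [smul_pow] using h.pow_right n
  induction k with
  | zero => simp
  | succ k ih =>
    rw [pow_succ', Nat.succ_mul, pow_add, mul_smul]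
    exact (hn.smul_right (q ^ (k * n))).mul_left ih

theorem pow_mul_pow_mul_pow_mul_pow_of_semiconjBy {q : S} {B C : R}
    (h : SemiconjBy C B (q • B)) (k l x y : ℕ) :
    B ^ l * C ^ k * (B ^ y * C ^ x) = q ^ (k * y) • (B ^ (l + y) * C ^ (k + x)) := by
  calc B ^ l * C ^ k * (B ^ y * C ^ x)
      = B ^ l * (C ^ k * B ^ y) * C ^ x := by simp only [mul_assoc]
    _ = B ^ l * (q ^ (k * y) • B ^ y * C ^ k) * C ^ x := by
      rw [(semiconjBy_pow_pow_smul h k y).eq]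
    _ = q ^ (k * y) • (B ^ (l + y) * C ^ (k + x)) := by
      simp only [smul_mul_assoc, mul_smul_comm, pow_add, mul_assoc]

end Monoid

theorem lie_pow_mul_pow_of_semiconjBy [Ring S] [Ring R] [Module S R] [IsScalarTower S R R]
    [SMulCommClass S R R] {q : S} {B C : R} (h : SemiconjBy C B (q • B)) (k l x y : ℕ) :
    ⁅B ^ l * C ^ k, B ^ y * C ^ x⁆ =
      (q ^ (k * y) - q ^ (l * x)) • (B ^ (l + y) * C ^ (k + x)) := by
  rw [Ring.lie_def, pow_mul_pow_mul_pow_mul_pow_of_semiconjBy h,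
    pow_mul_pow_mul_pow_mul_pow_of_semiconjBy h, sub_smul, add_comm y l, add_comm x k,
    mul_comm x l]

/-- Since `⁅A, B⁆ * B = ⁅A * B, B⁆`, the term `d` drops out. -/
theorem semiconjBy_lie_smul_of_mul_eq_smul_mul_add [Ring R] [SMul S R]
    [IsScalarTower S R R] [SMulCommClass S R R] {q : S} {A B d : R}
    (h : A * B = q • (B * A) + d) (hd : Commute d B) :
    SemiconjBy ⁅A, B⁆ B (q • B) := by
  calc ⁅A, B⁆ * B = A * B * B - B * (A * B) := by rw [Ring.lie_def, sub_mul, mul_assoc B]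
    _ = (q • (B * A) + d) * B - B * (q • (B * A) + d) := by rw [h]
    _ = q • (B * A) * B - B * (q • (B * A)) := by
      rw [add_mul, mul_add, hd.eq, add_sub_add_right_eq_sub]
    _ = q • B * ⁅A, B⁆ := by
      simp only [Ring.lie_def, smul_mul_assoc, mul_smul_comm, mul_sub, mul_assoc]

end QCommutation

theorem genA_mul_genB (F : Type*) [Field F] (m b : F) :
    genA F m b * genB F m b =
      m • (genB F m b * genA F m b) + algebraMap F (TwistAlg F m b) b := by
  simpa only [genA, genB, map_mul, map_add, map_smul, AlgHom.commutes] using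
    RingQuot.mkAlgHom_rel F (s := twistRel F m b) ⟨rfl, rfl⟩

theorem semiconjBy_genC_genB (F : Type*) [Field F] (m b : F) :
    SemiconjBy (genC F m b) (genB F m b) (m • genB F m b) :=
  semiconjBy_lie_smul_of_mul_eq_smul_mul_add (genA_mul_genB F m b) (Algebra.commutes b _)

theorem stmt12 (F : Type*) [Field F] (m b : F) (hm0 : m ≠ 0) (hm1 : m ≠ 1)
    (k l x y : ℕ) (hk : 1 ≤ k) (hl : 1 ≤ l) (hx : 1 ≤ x) (hy : 1 ≤ y) :
    ⁅genB F m b ^ l * genC F m b ^ k, genB F m b ^ y * genC F m b ^ x⁆ =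
      (m ^ (k * y) - m ^ (l * x)) • (genB F m b ^ (l + y) * genC F m b ^ (k + x)) :=
  lie_pow_mul_pow_of_semiconjBy (semiconjBy_genC_genB F m b) k l x y
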